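/- For every stationary process (X_i)_{i∈ℤ} over a finite alphabet 𝕏, all positive integers p and k, and n = pk, we have H(X_1^n)/n − H(X_1^k|ℐ)/k ≤ 2/k + (2/n) log₂ k + (3k/n) log₂|𝕏| · (E[D(k, X_1^n)] + 1). -/

import Mathlib

open MeasureTheory Filter Real

variable {𝕏 : Type*} [Fintype 𝕏] [Nonempty 𝕏] [DecidableEq 𝕏]
  [MeasurableSpace 𝕏] [MeasurableSingletonClass 𝕏]

/-- The left shift on two-sided sequences: `(shift ω) i = ω (i + 1)`. -/
def shift (ω : ℤ → 𝕏) : ℤ → 𝕏 := fun i => ω (i + 1)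

/-- The block `X_{s+1}^{s+l}` of a sequence `ω`, as a tuple in `𝕏^l`. -/
def blk (s l : ℕ) (ω : ℤ → 𝕏) : Fin l → 𝕏 := fun i => ω ((s : ℤ) + 1 + (i : ℤ))

/-- Shannon entropy (base 2) of a distribution `p` on a finite set:
`H(p) = -∑_{w : p w > 0} p w * log₂ (p w)` (`logb 2 0 = 0`, so zero-mass
points contribute nothing). -/
noncomputable def Hent {A : Type*} [Fintype A] (p : A → ℝ) : ℝ :=
  -∑ w, p w * Real.logb 2 (p w)

/-- Empirical nonoverlapping-block distribution
`p_k(w, x_1^n) = ⌊n/k⌋⁻¹ ∑_{i=1}^{⌊n/k⌋} 1[x_{(i-1)k+1}^{ik} = w]`. -/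
noncomputable def empDist (k n : ℕ) (ω : ℤ → 𝕏) : (Fin k → 𝕏) → ℝ :=
  fun w => (∑ i ∈ Finset.range (n / k), if blk (i * k) k ω = w then (1 : ℝ) else 0) / (n / k : ℕ)

/-- Plug-in estimator `H(k, x_1^n)` of the block entropy. -/
noncomputable def plugIn (k n : ℕ) (ω : ℤ → 𝕏) : ℝ := Hent (empDist k n ω)

/-- True block distribution `p_k(w) = P(X_1^k = w)`. -/
noncomputable def pblock (μ : Measure (ℤ → 𝕏)) (k : ℕ) : (Fin k → 𝕏) → ℝ :=
  fun w => (μ {ω | blk 0 k ω = w}).toReal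

/-- Block entropy `H(k) = H(p_k)`. -/
noncomputable def Hblock (μ : Measure (ℤ → 𝕏)) (k : ℕ) : ℝ := Hent (pblock μ k)

/-- Number `D(k, x_1^n)` of distinct nonoverlapping `k`-blocks in `x_1^n`. -/
noncomputable def Dcount (k n : ℕ) (ω : ℤ → 𝕏) : ℕ :=
  Set.ncard {w : Fin k → 𝕏 | ∃ i < n / k, blk (i * k) k ω = w}

/-- Length bound `K(k, x_1^n)` of the modified `k`-block code:
`K(k,x_1^n) = 2 log₂ k + (n/k)(H(k,x_1^n) + 2) + 3 k log₂|𝕏| (D(k,x_1^n) + 1)`. -/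
noncomputable def Kcode (k n : ℕ) (ω : ℤ → 𝕏) : ℝ :=
  2 * Real.logb 2 k + ((n : ℝ) / k) * (plugIn k n ω + 2)
    + 3 * k * Real.logb 2 (Fintype.card 𝕏) * (Dcount k n ω + 1)

/-- Conditional probability `P(X_1^k = w | ℐ)` given the shift-invariant
σ-algebra `ℐ`, as a function of the sample point. -/
noncomputable def condP (μ : Measure (ℤ → 𝕏)) (k : ℕ) (w : Fin k → 𝕏) : (ℤ → 𝕏) → ℝ :=
  μ[Set.indicator {ω | blk 0 k ω = w} (fun _ => (1 : ℝ)) | MeasurableSpace.invariants shift]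

/-- Conditional block entropy `H(X_1^k | ℐ) = E[-log₂ P(X_1^k = w | ℐ)|_{w = X_1^k}]`. -/
noncomputable def condH (μ : Measure (ℤ → 𝕏)) (k : ℕ) : ℝ :=
  ∫ ω, -Real.logb 2 (condP μ k (blk 0 k ω) ω) ∂μ

/-- `σ(y) = min(2^y, 1)`. -/
noncomputable def sigmaFn (y : ℝ) : ℝ := min ((2 : ℝ) ^ y) 1

/-- Negative part `x⁻ = -x · 1[x < 0]`. -/
noncomputable def nPart (x : ℝ) : ℝ := if x < 0 then -x else 0

/-- Gibbs inequality for the Shannon entropy. -/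
theorem Hent_le_cross {B : Type*} [Fintype B] (P Q : B → ℝ) (hP : ∀ b, 0 ≤ P b)
    (hP1 : ∑ b, P b = 1) (hQ : ∀ b, 0 < Q b) (hQ1 : ∑ b, Q b ≤ 1) :
    Hent P ≤ ∑ b, P b * (-Real.logb 2 (Q b)) := by
  have hl2 : 0 < Real.log 2 := Real.log_pos (by norm_num)
  have key : ∀ b, P b * (Real.log (Q b) - Real.log (P b)) ≤ Q b - P b := by
    intro b
    rcases (hP b).eq_or_lt with h | h
    · rw [← h]; simp [(hQ b).le]
    · rw [← Real.log_div (hQ b).ne' h.ne']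
      have := Real.log_le_sub_one_of_pos (div_pos (hQ b) h)
      calc _ ≤ P b * (Q b / P b - 1) := mul_le_mul_of_nonneg_left this h.le
        _ = _ := by field_simp
  have hs : ∑ b, P b * (Real.log (Q b) - Real.log (P b)) ≤ 0 := by
    calc _ ≤ ∑ b, (Q b - P b) := Finset.sum_le_sum fun b _ => key b
      _ ≤ 0 := by rw [Finset.sum_sub_distrib, hP1]; linarith
  have e : Hent P - ∑ b, P b * (-Real.logb 2 (Q b))
      = (∑ b, P b * (Real.log (Q b) - Real.log (P b))) / Real.log 2 := by
    unfold Hent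
    rw [← Finset.sum_neg_distrib, ← Finset.sum_sub_distrib, Finset.sum_div]
    refine Finset.sum_congr rfl fun b _ => ?_
    unfold Real.logb
    ring
  have := div_nonpos_of_nonpos_of_nonneg hs hl2.le
  linarith

/-- Number of occurrences of a letter in a word. -/
def cnt {A : Type*} [DecidableEq A] {p : ℕ} (y : Fin p → A) (a : A) : ℕ :=
  (Finset.univ.filter fun i => y i = a).card

theorem cnt_pos {A : Type*} [DecidableEq A] {p : ℕ} (y : Fin p → A) (i : Fin p) :
    0 < cnt y (y i) := Finset.card_pos.2 ⟨i, by simp⟩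

theorem cnt_le {A : Type*} [DecidableEq A] {p : ℕ} (y : Fin p → A) (a : A) :
    cnt y a ≤ p := by
  unfold cnt
  exact (Finset.card_le_univ _).trans (by simp)

theorem cnt_sum {A : Type*} [Fintype A] [DecidableEq A] {p : ℕ} (y : Fin p → A) :
    ∑ a, cnt y a = p := by
  unfold cnt
  rw [← Finset.card_eq_sum_card_fiberwise (f := y) (t := Finset.univ) (by intro x; simp)]
  simp

/-- Pointwise Gibbs inequality: the empirical distribution maximises the likelihood. -/
theorem emp_gibbs {A : Type*} [Fintype A] [DecidableEq A] {p : ℕ} (y : Fin p → A)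
    (q : A → ℝ) (hq : ∀ a, 0 ≤ q a) (hq1 : ∑ a, q a ≤ 1) (hqy : ∀ i, 0 < q (y i)) :
    ∑ i, -Real.logb 2 ((cnt y (y i) : ℝ) / p) ≤ ∑ i, -Real.logb 2 (q (y i)) := by
  have hl2 : 0 < Real.log 2 := Real.log_pos (by norm_num)
  rcases Nat.eq_zero_or_pos p with h0 | hp
  · subst h0; simp
  have hp' : (0:ℝ) < p := by exact_mod_cast hp
  have hc : ∀ i, (0:ℝ) < (cnt y (y i) : ℝ) := fun i => by exact_mod_cast cnt_pos y i
  have h1 : ∑ i, (Real.log (q (y i)) - Real.log ((cnt y (y i) : ℝ) / p))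
      ≤ ∑ i, (q (y i) / ((cnt y (y i) : ℝ) / p) - 1) := by
    refine Finset.sum_le_sum fun i _ => ?_
    rw [← Real.log_div (hqy i).ne' (div_pos (hc i) hp').ne']
    exact Real.log_le_sub_one_of_pos (div_pos (hqy i) (div_pos (hc i) hp'))
  have h2 : ∑ i, (q (y i) / ((cnt y (y i) : ℝ) / p)) ≤ p := by
    rw [← Finset.sum_fiberwise (s := Finset.univ) (g := y)]
    calc _ ≤ ∑ a, p * q a := by
          refine Finset.sum_le_sum fun a _ => ?_
          have : ∀ i ∈ Finset.univ.filter (fun i => y i = a),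
              q (y i) / ((cnt y (y i) : ℝ) / p) = q a / ((cnt y a : ℝ) / p) := by
            intro i hi
            rw [(Finset.mem_filter.1 hi).2]
          rw [Finset.sum_congr rfl this, Finset.sum_const, nsmul_eq_mul]
          change (cnt y a : ℝ) * _ ≤ _
          rcases Nat.eq_zero_or_pos (cnt y a) with h | h
          · rw [h]; simpa using mul_nonneg hp'.le (hq a)
          · have : (0:ℝ) < cnt y a := by exact_mod_cast h
            apply le_of_eq
            field_simp
      _ ≤ p := by
          rw [← Finset.mul_sum]
          nlinarith
  have h3 : ∑ i, (Real.log (q (y i)) - Real.log ((cnt y (y i) : ℝ) / p)) ≤ 0 := by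
    refine h1.trans ?_
    rw [Finset.sum_sub_distrib]
    simp only [Finset.sum_const, Finset.card_univ, Fintype.card_fin, nsmul_eq_mul, mul_one]
    linarith
  have e : ∑ i, -Real.logb 2 ((cnt y (y i) : ℝ) / p) - ∑ i, -Real.logb 2 (q (y i))
      = (∑ i, (Real.log (q (y i)) - Real.log ((cnt y (y i) : ℝ) / p))) / Real.log 2 := by
    rw [← Finset.sum_sub_distrib, Finset.sum_div]
    refine Finset.sum_congr rfl fun b _ => ?_
    unfold Real.logb
    ring
  have := div_nonpos_of_nonpos_of_nonneg h3 hl2.le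
  linarith

/-- Weight of a single multiplicity. -/
noncomputable def fw (N : ℕ) (j : ℕ) : ℝ := if j = 0 then 1 else (1 / 4 : ℝ) ^ j * (N : ℝ)⁻¹

theorem fw_nonneg (N j : ℕ) : 0 ≤ fw N j := by
  unfold fw; split_ifs <;> positivity

theorem fw_sum (N p : ℕ) :
    ∑ j ∈ Finset.range (p + 1), fw N j ≤ 1 + (1 / 3) * (N : ℝ)⁻¹ := by
  have : ∀ p : ℕ, ∑ j ∈ Finset.range (p + 1), fw N j
      = 1 + (1 / 3) * (1 - (1 / 4 : ℝ) ^ p) * (N : ℝ)⁻¹ := by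
    intro p
    induction p with
    | zero => simp [fw]
    | succ p ih =>
      rw [Finset.sum_range_succ, ih]
      simp only [fw, Nat.succ_ne_zero, if_false]
      ring
  rw [this]
  have h1 : (0:ℝ) ≤ (1/4:ℝ)^p := by positivity
  have h2 : (0:ℝ) ≤ (N:ℝ)⁻¹ := by positivity
  nlinarith [mul_nonneg h1 h2]

/-- The code distribution. -/
noncomputable def Qc {A : Type*} [Fintype A] [DecidableEq A] {p : ℕ} (y : Fin p → A) : ℝ :=
  (∏ a, fw (Fintype.card A) (cnt y a)) * ∏ i, ((cnt y (y i) : ℝ) / p)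

theorem Qc_sum {A : Type*} [Fintype A] [Nonempty A] [DecidableEq A] {p : ℕ} (hp : 0 < p) :
    ∑ y : Fin p → A, Qc y ≤ 1 := by
  classical
  have hp' : (0:ℝ) < p := by exact_mod_cast hp
  set N := Fintype.card A with hN
  have hNpos : (0:ℝ) < N := by exact_mod_cast Fintype.card_pos
  set T : Finset (A → ℕ) := Fintype.piFinset fun _ => Finset.range (p + 1) with hT
  have hmaps : ∀ y ∈ (Finset.univ : Finset (Fin p → A)), cnt y ∈ T.erase 0 := by
    intro y _
    rw [Finset.mem_erase]
    refine ⟨fun h => ?_, ?_⟩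
    · have := cnt_pos y ⟨0, hp⟩
      rw [h] at this
      simp at this
    · rw [hT, Fintype.mem_piFinset]
      intro a
      rw [Finset.mem_range]
      exact Nat.lt_succ_of_le (cnt_le y a)
  rw [← Finset.sum_fiberwise_of_maps_to hmaps]
  have h1 : ∀ c ∈ T.erase 0, ∑ y ∈ Finset.univ.filter (fun y : Fin p → A => cnt y = c), Qc y
      ≤ ∏ a, fw N (c a) := by
    intro c _
    have hW : 0 ≤ ∏ a, fw N (c a) := Finset.prod_nonneg fun a _ => fw_nonneg _ _
    by_cases hc : ∑ a, c a = p
    · calc ∑ y ∈ Finset.univ.filter (fun y : Fin p → A => cnt y = c), Qc y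
          = ∑ y ∈ Finset.univ.filter (fun y : Fin p → A => cnt y = c),
              (∏ a, fw N (c a)) * ∏ i, ((c (y i) : ℝ) / p) := by
            refine Finset.sum_congr rfl fun y hy => ?_
            have := (Finset.mem_filter.1 hy).2
            unfold Qc
            rw [this]
        _ ≤ ∑ y : Fin p → A, (∏ a, fw N (c a)) * ∏ i, ((c (y i) : ℝ) / p) := by
            refine Finset.sum_le_sum_of_subset_of_nonneg (Finset.filter_subset _ _) ?_
            intro y _ _
            exact mul_nonneg hW (Finset.prod_nonneg fun i _ => by positivity)
        _ = (∏ a, fw N (c a)) * 1 := by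
            rw [← Finset.mul_sum]
            congr 1
            have := Finset.prod_univ_sum (fun _ : Fin p => (Finset.univ : Finset A))
              (fun _ a => (c a : ℝ) / p)
            rw [Fintype.piFinset_univ] at this
            rw [← this, ← Finset.sum_div]
            have hc' : ∑ a, (c a : ℝ) = p := by exact_mod_cast hc
            rw [hc', div_self hp'.ne']
            simp
        _ = _ := mul_one _
    · rw [Finset.filter_eq_empty_iff.2]
      · simpa using hW
      · intro y _ h
        exact hc (h ▸ cnt_sum y)
  refine (Finset.sum_le_sum h1).trans ?_
  have h0 : (0 : A → ℕ) ∈ T := by simp [hT]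
  have h2 := Finset.add_sum_erase T (fun c => ∏ a, fw N (c a)) h0
  have h3 : ∏ a : A, fw N ((0 : A → ℕ) a) = 1 := by simp [fw]
  have h4 : ∑ c ∈ T, ∏ a, fw N (c a) ≤ 2 := by
    rw [hT, ← Finset.prod_univ_sum, Finset.prod_const, Finset.card_univ, ← hN]
    calc _ ≤ (1 + (1 / 3) * (N : ℝ)⁻¹) ^ N :=
          pow_le_pow_left₀ (Finset.sum_nonneg fun j _ => fw_nonneg _ _) (fw_sum N p) N
      _ ≤ (Real.exp ((1 / 3) * (N : ℝ)⁻¹)) ^ N := by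
          refine pow_le_pow_left₀ (by positivity) ?_ N
          rw [add_comm]; exact Real.add_one_le_exp _
      _ = Real.exp (1 / 3) := by
          rw [← Real.exp_nat_mul]; congr 1; field_simp
      _ ≤ 2 := by
          have : (Real.exp (1/3)) ^ 3 ≤ 2 ^ 3 := by
            rw [← Real.exp_nat_mul]
            norm_num
            linarith [Real.exp_one_lt_d9]
          exact le_of_pow_le_pow_left₀ (by norm_num) (by norm_num) this
  simp only [h3] at h2
  linarith

theorem Qc_pos {A : Type*} [Fintype A] [Nonempty A] [DecidableEq A] {p : ℕ} (hp : 0 < p)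
    (y : Fin p → A) : 0 < Qc y := by
  have hp' : (0:ℝ) < p := by exact_mod_cast hp
  have hNpos : (0:ℝ) < Fintype.card A := by exact_mod_cast Fintype.card_pos
  refine mul_pos (Finset.prod_pos fun a _ => ?_) (Finset.prod_pos fun i _ => ?_)
  · unfold fw; split_ifs <;> positivity
  · exact div_pos (by exact_mod_cast cnt_pos y i) hp'

theorem Qc_log {A : Type*} [Fintype A] [Nonempty A] [DecidableEq A] {p : ℕ} (hp : 0 < p)
    (y : Fin p → A) : -Real.logb 2 (Qc y) = 2 * p
      + (Finset.univ.image y).card * Real.logb 2 (Fintype.card A)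
      + ∑ i, -Real.logb 2 ((cnt y (y i) : ℝ) / p) := by
  have hp' : (0:ℝ) < p := by exact_mod_cast hp
  have hNpos : (0:ℝ) < Fintype.card A := by exact_mod_cast Fintype.card_pos
  have hc : ∀ i, (cnt y (y i) : ℝ) / p ≠ 0 := fun i =>
    (div_pos (by exact_mod_cast cnt_pos y i) hp').ne'
  have hf : ∀ a, fw (Fintype.card A) (cnt y a) ≠ 0 := by
    intro a; apply ne_of_gt; unfold fw; split_ifs <;> positivity
  unfold Qc
  rw [Real.logb_mul (Finset.prod_ne_zero_iff.2 fun a _ => hf a)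
    (Finset.prod_ne_zero_iff.2 fun i _ => hc i), Real.logb_prod _ _ (fun a _ => hf a),
    Real.logb_prod _ _ (fun i _ => hc i), Finset.sum_neg_distrib]
  have h4 : Real.logb 2 (1/4) = -2 := by
    rw [show (1/4:ℝ) = 2 ^ (-2:ℝ) by norm_num [Real.rpow_neg]]
    exact Real.logb_rpow (by norm_num) (by norm_num)
  have : ∀ a, Real.logb 2 (fw (Fintype.card A) (cnt y a))
      = -2 * (cnt y a : ℝ) - if a ∈ Finset.univ.image y then Real.logb 2 (Fintype.card A) else 0 := by
    intro a
    have hiff : a ∈ Finset.univ.image y ↔ cnt y a ≠ 0 := by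
      unfold cnt
      rw [Finset.card_ne_zero]
      simp [Finset.Nonempty]
    unfold fw
    by_cases h : cnt y a = 0
    · have : a ∉ Finset.univ.image y := by rw [hiff]; simpa using h
      rw [if_pos h, if_neg this, h]; simp
    · rw [if_neg h, if_pos (hiff.2 h), Real.logb_mul (by positivity) (by positivity),
        Real.logb_pow, h4, Real.logb_inv]
      ring
  rw [Finset.sum_congr rfl fun a _ => this a, Finset.sum_sub_distrib, ← Finset.mul_sum]
  have hs : ∑ a, (cnt y a : ℝ) = p := by exact_mod_cast cnt_sum y
  rw [hs, Finset.sum_ite_mem, Finset.univ_inter, Finset.sum_const, nsmul_eq_mul]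
  ring

set_option linter.unusedSectionVars false

theorem measurable_blk (s l : ℕ) : Measurable (blk s l : (ℤ → 𝕏) → (Fin l → 𝕏)) :=
  measurable_pi_lambda _ fun _ => measurable_pi_apply _

theorem measurableSet_blk (s l : ℕ) (w : Fin l → 𝕏) :
    MeasurableSet {ω : ℤ → 𝕏 | blk s l ω = w} :=
  measurable_blk s l (measurableSet_singleton w)

theorem condP_meas (μ : Measure (ℤ → 𝕏)) (k : ℕ) (w : Fin k → 𝕏) :
    Measurable[MeasurableSpace.invariants shift] (condP μ k w) :=
  stronglyMeasurable_condExp.measurable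

theorem condP_meas' (μ : Measure (ℤ → 𝕏)) (k : ℕ) (w : Fin k → 𝕏) :
    Measurable (condP μ k w) :=
  (condP_meas μ k w).mono (MeasurableSpace.invariants_le _) le_rfl

theorem condP_iter (μ : Measure (ℤ → 𝕏)) (k : ℕ) (w : Fin k → 𝕏) (m : ℕ) (ω : ℤ → 𝕏) :
    condP μ k w (shift^[m] ω) = condP μ k w ω := by
  have h := MeasurableSpace.comp_eq_of_measurable_invariants (condP_meas μ k w)
  induction m with
  | zero => rfl
  | succ m ih => rw [Function.iterate_succ_apply', ← ih]; exact congrFun h _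

theorem shift_iter (m : ℕ) (ω : ℤ → 𝕏) (i : ℤ) : (shift^[m] ω) i = ω (i + m) := by
  induction m generalizing i with
  | zero => simp
  | succ m ih =>
    rw [Function.iterate_succ_apply', shift, ih]
    congr 1; push_cast; ring

theorem blk_iter (m k : ℕ) (ω : ℤ → 𝕏) : blk 0 k (shift^[m] ω) = blk m k ω := by
  funext i
  unfold blk
  rw [shift_iter]
  congr 1; push_cast; ring

theorem ind_integrable (μ : Measure (ℤ → 𝕏)) [IsProbabilityMeasure μ] (k : ℕ) (w : Fin k → 𝕏) :
    Integrable (Set.indicator {ω : ℤ → 𝕏 | blk 0 k ω = w} (fun _ => (1 : ℝ))) μ :=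
  (integrable_const 1).indicator (measurableSet_blk 0 k w)

theorem condP_nonneg (μ : Measure (ℤ → 𝕏)) [IsProbabilityMeasure μ] (k : ℕ) (w : Fin k → 𝕏) :
    0 ≤ᵐ[μ] condP μ k w :=
  condExp_nonneg (ae_of_all _ fun ω => Set.indicator_nonneg (fun _ _ => zero_le_one) ω)

theorem condP_sum (μ : Measure (ℤ → 𝕏)) [IsProbabilityMeasure μ] (k : ℕ) :
    ∀ᵐ ω ∂μ, ∑ w, condP μ k w ω = 1 := by
  have h := condExp_finsetSum (μ := μ) (s := Finset.univ)
    (f := fun w : Fin k → 𝕏 => Set.indicator {ω : ℤ → 𝕏 | blk 0 k ω = w} (fun _ => (1 : ℝ)))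
    (fun w _ => ind_integrable μ k w) (MeasurableSpace.invariants shift)
  have h1 : (∑ w : Fin k → 𝕏, Set.indicator {ω : ℤ → 𝕏 | blk 0 k ω = w} (fun _ => (1 : ℝ)))
      = fun _ => 1 := by
    funext ω
    rw [Finset.sum_apply]
    simp [Set.indicator_apply]
  rw [h1, condExp_const (MeasurableSpace.invariants_le _)] at h
  filter_upwards [h] with ω hω
  rw [Finset.sum_apply] at hω
  exact hω.symm

theorem lintegral_blk (μ : Measure (ℤ → 𝕏)) [IsProbabilityMeasure μ] (k : ℕ) (w : Fin k → 𝕏)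
    (h : (ℤ → 𝕏) → ENNReal) (hh : Measurable[MeasurableSpace.invariants shift] h) :
    ∫⁻ ω in {ω | blk 0 k ω = w}, h ω ∂μ
      = ∫⁻ ω, ENNReal.ofReal (condP μ k w ω) * h ω ∂μ := by
  have hm := MeasurableSpace.invariants_le (shift : (ℤ → 𝕏) → (ℤ → 𝕏))
  have hg : Measurable[MeasurableSpace.invariants shift]
      (fun ω => ENNReal.ofReal (condP μ k w ω)) :=
    ENNReal.measurable_ofReal.comp (condP_meas μ k w)
  have key : (μ.restrict {ω | blk 0 k ω = w}).trim hm
      = (μ.trim hm).withDensity (fun ω => ENNReal.ofReal (condP μ k w ω)) := by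
    refine @Measure.ext _ (MeasurableSpace.invariants shift) _ _ fun s hs => ?_
    rw [trim_measurableSet_eq hm hs, withDensity_apply _ hs, restrict_trim hm μ hs,
      lintegral_trim hm hg, Measure.restrict_apply (hm s hs),
      ← ofReal_integral_eq_lintegral_ofReal (f := condP μ k w) integrable_condExp.integrableOn
        (ae_restrict_of_ae (condP_nonneg μ k w))]
    unfold condP
    rw [setIntegral_condExp hm (ind_integrable μ k w) hs,
      setIntegral_indicator (measurableSet_blk 0 k w)]
    simp
  rw [← lintegral_trim hm hh, key, lintegral_withDensity_eq_lintegral_mul _ hg hh,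
    lintegral_trim hm (hg.mul hh)]
  rfl

theorem condP_pos (μ : Measure (ℤ → 𝕏)) [IsProbabilityMeasure μ] (k : ℕ) :
    ∀ᵐ ω ∂μ, 0 < condP μ k (blk 0 k ω) ω := by
  have h : ∀ w : Fin k → 𝕏, ∀ᵐ ω ∂μ, blk 0 k ω = w → 0 < condP μ k w ω := by
    intro w
    have hs : MeasurableSet[MeasurableSpace.invariants shift] {ω | condP μ k w ω ≤ 0} :=
      condP_meas μ k w measurableSet_Iic
    have hs' : MeasurableSet {ω | condP μ k w ω ≤ 0} := MeasurableSpace.invariants_le _ _ hs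
    have h1 := lintegral_blk μ k w (Set.indicator {ω | condP μ k w ω ≤ 0} 1)
      (Measurable.indicator (f := fun _ => 1) measurable_const hs)
    have h2 : ∀ ω, ENNReal.ofReal (condP μ k w ω) *
        Set.indicator {ω | condP μ k w ω ≤ 0} 1 ω = 0 := by
      intro ω
      by_cases hω : condP μ k w ω ≤ 0
      · rw [ENNReal.ofReal_of_nonpos hω, zero_mul]
      · rw [Set.indicator_of_notMem (by simpa using hω), mul_zero]
    simp only [h2, lintegral_zero] at h1
    rw [lintegral_indicator_one hs', Measure.restrict_apply hs'] at h1
    rw [ae_iff]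
    refine measure_mono_null ?_ h1
    intro ω hω
    simp only [Set.mem_ofPred_eq, Classical.not_imp, not_lt] at hω
    exact ⟨hω.2, hω.1⟩
  filter_upwards [ae_all_iff.2 h] with ω hω
  exact hω _ rfl

theorem sum_ind (μ : Measure (ℤ → 𝕏)) (k : ℕ) (ω : ℤ → 𝕏) :
    -Real.logb 2 (condP μ k (blk 0 k ω) ω) = ∑ w : Fin k → 𝕏,
      Set.indicator {ω | blk 0 k ω = w} (fun ω => -Real.logb 2 (condP μ k w ω)) ω := by
  simp [Set.indicator_apply]

theorem condH_integrable (μ : Measure (ℤ → 𝕏)) [IsProbabilityMeasure μ] (k : ℕ) :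
    Integrable (fun ω => -Real.logb 2 (condP μ k (blk 0 k ω) ω)) μ := by
  simp_rw [sum_ind]
  refine integrable_finsetSum _ fun w _ => ?_
  rw [integrable_indicator_iff (measurableSet_blk 0 k w)]
  have hmeas : Measurable[MeasurableSpace.invariants shift]
      (fun ω => -Real.logb 2 (condP μ k w ω)) := by
    have : Measurable (fun x : ℝ => -Real.logb 2 x) := by unfold Real.logb; fun_prop
    exact this.comp (condP_meas μ k w)
  have hmeas' := hmeas.mono (MeasurableSpace.invariants_le _) le_rfl
  refine ⟨hmeas'.aestronglyMeasurable, ?_⟩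
  rw [hasFiniteIntegral_iff_enorm, lintegral_blk μ k w _ (by exact measurable_enorm.comp hmeas)]
  have hle : ∀ᵐ ω ∂μ, condP μ k w ω ≤ 1 := by
    filter_upwards [condP_sum μ k, ae_all_iff.2 (fun w => condP_nonneg μ k w)] with ω h1 h2
    rw [← h1]
    exact Finset.single_le_sum (f := fun w => condP μ k w ω) (fun i _ => h2 i) (Finset.mem_univ w)
  refine lt_of_le_of_lt (lintegral_mono_ae (g := fun _ => ENNReal.ofReal (1 / Real.log 2)) ?_)
    (by simp)
  filter_upwards [hle, condP_nonneg μ k w] with ω h1 h0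
  have h0 : 0 ≤ condP μ k w ω := h0
  have hl2 : 0 < Real.log 2 := Real.log_pos (by norm_num)
  rw [Real.enorm_eq_ofReal_abs, ← ENNReal.ofReal_mul h0]
  refine ENNReal.ofReal_le_ofReal ?_
  rcases h0.eq_or_lt with h | h
  · rw [← h]; simpa using hl2.le
  · have := Real.abs_log_mul_self_lt _ h h1
    rw [abs_neg, Real.logb, abs_div, abs_of_pos hl2, mul_div_assoc', div_le_div_iff_of_pos_right hl2]
    rw [abs_mul, abs_of_pos h] at this
    linarith

/-- Cutting a word of length `p * k` into `p` blocks of length `k`. -/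
def cut (p k : ℕ) (x : Fin (p * k) → 𝕏) : Fin p → Fin k → 𝕏 :=
  fun i j => x (finProdFinEquiv (i, j))

theorem cut_injective (p k : ℕ) : Function.Injective (cut p k : (Fin (p * k) → 𝕏) → _) := by
  intro x y h
  funext i
  have := congrFun (congrFun h (finProdFinEquiv.symm i).1) (finProdFinEquiv.symm i).2
  simpa only [cut, Prod.mk.eta, Equiv.apply_symm_apply] using this

theorem cut_blk (p k : ℕ) (ω : ℤ → 𝕏) (i : Fin p) :
    cut p k (blk 0 (p * k) ω) i = blk (i * k) k ω := by
  funext j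
  simp only [cut, blk, finProdFinEquiv_apply_val]
  congr 1
  push_cast
  ring

theorem Dcount_cut (p k : ℕ) (hk : 0 < k) (ω : ℤ → 𝕏) :
    Dcount k (p * k) ω = (Finset.univ.image (cut p k (blk 0 (p * k) ω))).card := by
  unfold Dcount
  rw [← Set.ncard_coe_finset, Nat.mul_div_cancel _ hk]
  congr 1
  ext w
  simp only [Finset.coe_image, Finset.coe_univ, Set.image_univ, Set.mem_range, cut_blk]
  constructor
  · rintro ⟨i, hi, h⟩
    exact ⟨⟨i, hi⟩, h⟩
  · rintro ⟨i, h⟩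
    exact ⟨i, i.2, h⟩

theorem integrable_blk (μ : Measure (ℤ → 𝕏)) [IsProbabilityMeasure μ] (n : ℕ)
    (f : (Fin n → 𝕏) → ℝ) : Integrable (fun ω => f (blk 0 n ω)) μ := by
  have : IsProbabilityMeasure (μ.map (blk 0 n)) :=
    Measure.isProbabilityMeasure_map (measurable_blk 0 n).aemeasurable
  exact (Integrable.of_finite (f := f) (μ := μ.map (blk 0 n))).comp_measurable (measurable_blk 0 n)

theorem integral_blk (μ : Measure (ℤ → 𝕏)) [IsProbabilityMeasure μ] (n : ℕ)
    (f : (Fin n → 𝕏) → ℝ) : ∫ ω, f (blk 0 n ω) ∂μ = ∑ x, pblock μ n x * f x := by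
  have : IsProbabilityMeasure (μ.map (blk 0 n)) :=
    Measure.isProbabilityMeasure_map (measurable_blk 0 n).aemeasurable
  have hf : Integrable f (μ.map (blk 0 n)) := Integrable.of_finite
  rw [← integral_map (measurable_blk 0 n).aemeasurable hf.aestronglyMeasurable,
    integral_fintype hf]
  refine Finset.sum_congr rfl fun x _ => ?_
  rw [smul_eq_mul, map_measureReal_apply (measurable_blk 0 n) (measurableSet_singleton x)]
  rfl

/-- For a stationary process over a finite alphabet, positive integers `p`, `k`
and `n = pk`, we have
`H(X_1^n)/n − H(X_1^k|ℐ)/k ≤ 2/k + (2/n) log₂ k + (3k/n) log₂|𝕏| (E[D(k,X_1^n)] + 1)`. -/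
theorem rate_difference_le_expected_Dcount
    {μ : Measure (ℤ → 𝕏)} [IsProbabilityMeasure μ]
    (hstat : MeasurePreserving shift μ μ)
    (p k n : ℕ) (hp : 0 < p) (hk : 0 < k) (hn : n = p * k) :
    Hblock μ n / n - condH μ k / k ≤
      2 / k + (2 / n) * Real.logb 2 k
        + (3 * k / n) * Real.logb 2 (Fintype.card 𝕏) *
          ((∫ ω, (Dcount k n ω : ℝ) ∂μ) + 1) := by
  subst hn
  classical
  have hp' : (0:ℝ) < p := by exact_mod_cast hp
  have hk' : (0:ℝ) < k := by exact_mod_cast hk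
  set L := Real.logb 2 (Fintype.card 𝕏) with hL
  have hL0 : 0 ≤ L := Real.logb_nonneg (by norm_num) (by exact_mod_cast Fintype.card_pos)
  have hcard : Real.logb 2 (Fintype.card (Fin k → 𝕏)) = k * L := by
    rw [Fintype.card_fun, Fintype.card_fin, Nat.cast_pow, Real.logb_pow]
  -- entropy bound
  have hsum : ∑ x, pblock μ (p * k) x = 1 := by
    have := integral_blk μ (p * k) (fun _ => 1)
    simpa using this.symm
  have hQ1 : ∑ x : Fin (p * k) → 𝕏, Qc (cut p k x) ≤ 1 := by
    rw [← Finset.sum_image (f := fun y : Fin p → Fin k → 𝕏 => Qc y) (g := cut p k)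
      (fun x _ y _ h => cut_injective p k h)]
    exact (Finset.sum_le_sum_of_subset_of_nonneg (Finset.subset_univ _)
      fun y _ _ => (Qc_pos hp y).le).trans (Qc_sum hp)
  have hH : Hblock μ (p * k) ≤ ∫ ω, -Real.logb 2 (Qc (cut p k (blk 0 (p * k) ω))) ∂μ := by
    rw [integral_blk μ (p * k) (fun x => -Real.logb 2 (Qc (cut p k x)))]
    exact Hent_le_cross _ _ (fun _ => ENNReal.toReal_nonneg) hsum (fun x => Qc_pos hp _) hQ1
  -- stationarity
  have hit : ∀ m : ℕ, MeasurePreserving (shift^[m]) μ μ := fun m => hstat.iterate m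
  have hcomp : ∀ m : ℕ, (fun ω => -Real.logb 2 (condP μ k (blk m k ω) ω))
      = (fun ω => -Real.logb 2 (condP μ k (blk 0 k ω) ω)) ∘ (shift^[m]) := by
    intro m
    funext ω
    simp only [Function.comp, blk_iter, condP_iter]
  have hint : ∀ m : ℕ, Integrable (fun ω => -Real.logb 2 (condP μ k (blk m k ω) ω)) μ := by
    intro m
    rw [hcomp]
    exact (hit m).integrable_comp_of_integrable (condH_integrable μ k)
  have heq : ∀ m : ℕ, ∫ ω, -Real.logb 2 (condP μ k (blk m k ω) ω) ∂μ = condH μ k := by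
    intro m
    rw [hcomp]
    have h1 := (condH_integrable μ k).aestronglyMeasurable
    rw [← (hit m).map_eq] at h1
    have := integral_map (hit m).measurable.aemeasurable h1
    rw [(hit m).map_eq] at this
    exact this.symm
  have hpos : ∀ m : ℕ, ∀ᵐ ω ∂μ, 0 < condP μ k (blk m k ω) ω := by
    intro m
    filter_upwards [(hit m).quasiMeasurePreserving.ae (condP_pos μ k)] with ω hω
    rwa [blk_iter, condP_iter] at hω
  have hDint : Integrable (fun ω => (Dcount k (p * k) ω : ℝ)) μ := by
    simp_rw [Dcount_cut p k hk]
    exact integrable_blk μ (p * k) (fun x => ((Finset.univ.image (cut p k x)).card : ℝ))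
  -- pointwise bound
  have hpt : ∀ᵐ ω ∂μ, -Real.logb 2 (Qc (cut p k (blk 0 (p * k) ω))) ≤
      (2 * p + (Dcount k (p * k) ω : ℝ) * (k * L))
        + ∑ i : Fin p, -Real.logb 2 (condP μ k (blk (i * k) k ω) ω) := by
    filter_upwards [condP_sum μ k, ae_all_iff.2 (fun w => condP_nonneg μ k w),
      ae_all_iff.2 (fun i : Fin p => hpos (i * k))] with ω h1 h2 h3
    rw [Qc_log hp, hcard, Dcount_cut p k hk]
    refine add_le_add le_rfl ?_
    have := emp_gibbs (cut p k (blk 0 (p * k) ω)) (fun w => condP μ k w ω) h2 h1.le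
      (fun i => by rw [cut_blk]; exact h3 i)
    simpa only [cut_blk] using this
  have hI1 : Integrable (fun ω => 2 * (p:ℝ) + (Dcount k (p * k) ω : ℝ) * (k * L)) μ :=
    (integrable_const _).add (hDint.mul_const _)
  have hI2 : Integrable (fun ω => ∑ i : Fin p,
      -Real.logb 2 (condP μ k (blk (i * k) k ω) ω)) μ :=
    integrable_finsetSum _ fun i _ => hint (i * k)
  have hmain : ∫ ω, -Real.logb 2 (Qc (cut p k (blk 0 (p * k) ω))) ∂μ ≤
      2 * p + (∫ ω, (Dcount k (p * k) ω : ℝ) ∂μ) * (k * L) + p * condH μ k := by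
    refine (integral_mono_ae
      (integrable_blk μ (p * k) (fun x => -Real.logb 2 (Qc (cut p k x)))) (hI1.add hI2) hpt).trans ?_
    simp only [Pi.add_apply]
    rw [integral_add hI1 hI2, integral_add (integrable_const _) (hDint.mul_const _),
      integral_mul_const _ (fun ω => (Dcount k (p * k) ω : ℝ)),
      integral_finsetSum _ fun (i : Fin p) _ => hint (i * k)]
    simp [heq]
  set E := ∫ ω, (Dcount k (p * k) ω : ℝ) ∂μ with hE
  have hE0 : 0 ≤ E := integral_nonneg fun ω => Nat.cast_nonneg _
  have hlk : 0 ≤ Real.logb 2 (k:ℝ) := Real.logb_nonneg (by norm_num) (by exact_mod_cast hk)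
  have hfin : Hblock μ (p * k) ≤ p * condH μ k + 2 * p + 2 * Real.logb 2 k
      + 3 * k * L * (E + 1) := by
    have h1 : 0 ≤ k * L := mul_nonneg hk'.le hL0
    nlinarith [mul_nonneg h1 hE0, hH.trans hmain]
  have hn' : (0:ℝ) < p * k := mul_pos hp' hk'
  have hd := div_le_div_of_nonneg_right hfin hn'.le
  push_cast
  have e : (p * condH μ k + 2 * p + 2 * Real.logb 2 k + 3 * k * L * (E + 1)) / ((p:ℝ) * k)
      = condH μ k / k + (2 / k + 2 / (p * k) * Real.logb 2 k + 3 * k / (p * k) * L * (E + 1)) := by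
    field_simp
    ring
  rw [e] at hd
  linarith
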